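/- Let d ≥ 2, let m = (m^{(0)}, …, m^{(d−1)}) ∈ ℤ^d be a weight system, and let λ, μ be d-partitions of r. Then Contc_λ = Contc_μ as multisets (with respect to m) if and only if there exists a finite sequence λ_(0), λ_(1), …, λ_(n) of d-partitions of r such that λ_(0) = λ, λ_(n) = μ, and λ_(i−1) ∼_C λ_(i) for all 1 ≤ i ≤ n. -/

import Mathlib

/-- The β-number of a partition `λ = (λ₁ ≥ … ≥ λ_h)` (given as a list), namely the list
`(λ₁ + h - 1, λ₂ + h - 2, …, λ_h + h - h)`. -/
def betaNumber (l : List ℕ) : List ℕ :=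
  l.mapIdx fun i a => a + l.length - (i + 1)

/-- The `m`-shifted sequence `β[m] = (β₁ + m, …, β_h + m, m - 1, m - 2, …, 1, 0)`. -/
def shiftedBeta (β : List ℕ) (m : ℕ) : List ℕ :=
  β.map (· + m) ++ (List.range m).reverse

/-- A list of natural numbers is a partition if it is weakly decreasing and its entries are
positive. -/
def IsPartitionList (l : List ℕ) : Prop :=
  l.Pairwise (· ≥ ·) ∧ ∀ x ∈ l, 0 < x

/-- A `d`-partition of `r`: a `d`-tuple of partitions whose sizes sum to `r`. -/
def IsMultipartitionOf (d r : ℕ) (lam : Fin d → List ℕ) : Prop :=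
  (∀ a, IsPartitionList (lam a)) ∧ (∑ a, (lam a).sum) = r

/-- The `m`-charged height `hc_λ := max_a (h_{λ^{(a)}} - m^{(a)})` of a `d`-partition `λ`
with respect to the weight system `m`. -/
def chargedHeight {d : ℕ} [NeZero d] (m : Fin d → ℤ) (lam : Fin d → List ℕ) : ℤ :=
  Finset.univ.sup' Finset.univ_nonempty fun a => ((lam a).length : ℤ) - m a

/-- The `m`-charged content of a `d`-partition `λ`: the multiset union of the entries of the
rows `Bc_λ^{(a)} = β_{λ^{(a)}}[hc_λ - hc_λ^{(a)}]` of the `m`-charged standard symbol. -/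
def chargedContent {d : ℕ} [NeZero d] (m : Fin d → ℤ) (lam : Fin d → List ℕ) : Multiset ℕ :=
  ∑ a : Fin d,
    (↑(shiftedBeta (betaNumber (lam a))
        ((chargedHeight m lam - (((lam a).length : ℤ) - m a)).toNat)) : Multiset ℕ)

/-- The relation `λ ∼_C μ` on `d`-partitions: there are `s < t` such that `λ` and `μ` agree
away from `s, t`, and the 2-partitions `(λ^{(s)}, λ^{(t)})` and `(μ^{(s)}, μ^{(t)})` have the
same charged content with respect to the weight system `(m^{(s)}, m^{(t)})`. -/
def SimC {d : ℕ} [NeZero d] (m : Fin d → ℤ) (lam mu : Fin d → List ℕ) : Prop :=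
  ∃ s t : Fin d, s < t ∧ (∀ a, a ≠ s → a ≠ t → lam a = mu a) ∧
    chargedContent ![m s, m t] ![lam s, lam t] = chargedContent ![m s, m t] ![mu s, mu t]

/-!
Fix a large integer `N` and put `k a = N + m a`. Shifting the `β`-number of the `a`-th component of
a `d`-partition to length `k a` turns that component into a subset of `ℕ` with `k a` elements, so a
`d`-partition becomes a `0/1`-matrix with `d` rows and prescribed row sums. The multiset union of
the rows records the column sums; it determines the charged content, because it is a translate of
the content by some `n` together with `d` copies of `0, …, n - 1`, and the content contains `0`
fewer than `d` times. Hence equality of charged contents means equality of all margins, and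
`λ ∼_C μ` means that the two matrices have the same margins and differ in at most two rows.

Two `0/1`-matrices `A` and `B` with the same margins are connected by such two-row moves, as in
Ryser's interchange theorem, by making one row after the other agree. If `x` lies in row `a` of `A`
only and `y` in row `a` of `B` only, and column `y` has at least as many ones as column `x`, then
some other row of `A` contains `y` but not `x`, and exchanging `x` and `y` between the two rows
brings row `a` of `A` closer to that of `B`. If column `x` has more ones, exchange in `B` instead.
-/

section BetaNumbers

theorem length_betaNumber (l : List ℕ) : (betaNumber l).length = l.length := by
  simp [betaNumber]

theorem betaNumber_cons (x : ℕ) (l : List ℕ) :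
    betaNumber (x :: l) = (x + l.length) :: betaNumber l := by
  simp only [betaNumber, List.mapIdx_cons, List.length_cons]
  congr 2
  funext i a
  omega

theorem betaNumber_injective : Function.Injective betaNumber := by
  intro l
  induction l with
  | nil =>
    intro l' h
    simpa [length_betaNumber, eq_comm] using congrArg List.length h
  | cons x l ih =>
    rintro (_ | ⟨y, l'⟩) h
    · simpa [length_betaNumber] using congrArg List.length h
    · simp only [betaNumber_cons, List.cons.injEq] at h
      obtain rfl := ih h.2
      rw [Nat.add_right_cancel h.1]

theorem isChain_gt_betaNumber_iff (l : List ℕ) :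
    (betaNumber l).IsChain (· > ·) ↔ l.IsChain (· ≥ ·) := by
  induction l with
  | nil => simp [betaNumber]
  | cons x l ih =>
    cases l with
    | nil => simp [betaNumber]
    | cons y l =>
      rw [betaNumber_cons y] at ih
      rw [betaNumber_cons, betaNumber_cons, List.isChain_cons_cons, List.isChain_cons_cons, ih,
        List.length_cons]
      exact and_congr_left fun _ => by omega

theorem pairwise_gt_betaNumber_iff (l : List ℕ) :
    (betaNumber l).Pairwise (· > ·) ↔ l.Pairwise (· ≥ ·) := by
  rw [← List.isChain_iff_pairwise, ← List.isChain_iff_pairwise, isChain_gt_betaNumber_iff]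

theorem exists_betaNumber_eq (L : List ℕ) (hL : L.Pairwise (· > ·)) :
    ∃ l, betaNumber l = L := by
  induction L with
  | nil => exact ⟨[], rfl⟩
  | cons y L ih =>
    obtain ⟨l, rfl⟩ := ih hL.of_cons
    have length_le : l.length ≤ y := by
      cases l with
      | nil => exact y.zero_le
      | cons x l =>
        have : x + l.length < y := List.rel_of_pairwise_cons hL (by simp [betaNumber_cons])
        simp only [List.length_cons]
        omega
    exact ⟨(y - l.length) :: l, by rw [betaNumber_cons, Nat.sub_add_cancel length_le]⟩

theorem sum_betaNumber (l : List ℕ) :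
    (betaNumber l).sum = l.sum + ∑ i ∈ Finset.range l.length, i := by
  induction l with
  | nil => rfl
  | cons x l ih =>
    rw [betaNumber_cons, List.sum_cons, List.sum_cons, ih, List.length_cons,
      Finset.sum_range_succ]
    omega

theorem zero_notMem_betaNumber {l : List ℕ} (hl : ∀ x ∈ l, 0 < x) : 0 ∉ betaNumber l := by
  simp only [betaNumber, List.mem_mapIdx, not_exists]
  intro i hi h
  have := hl _ (l.getElem_mem hi)
  omega

theorem shiftedBeta_shiftedBeta (β : List ℕ) (m n : ℕ) :
    shiftedBeta (shiftedBeta β m) n = shiftedBeta β (n + m) := by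
  rw [shiftedBeta, shiftedBeta, shiftedBeta, List.range_add]
  simp [Function.comp_def, Nat.add_comm n, Nat.add_assoc]

theorem betaNumber_replicate_zero (n : ℕ) :
    betaNumber (List.replicate n 0) = (List.range n).reverse := by
  induction n with
  | zero => rfl
  | succ n ih => simp [List.replicate_succ, betaNumber_cons, ih, List.range_succ]

theorem shiftedBeta_betaNumber (l : List ℕ) (n : ℕ) :
    shiftedBeta (betaNumber l) n = betaNumber (l ++ List.replicate n 0) := by
  induction l with
  | nil => exact (betaNumber_replicate_zero n).symm
  | cons x l ih =>
    rw [List.cons_append, betaNumber_cons, betaNumber_cons, ← ih]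
    simp [shiftedBeta, Nat.add_assoc]

end BetaNumbers

section PaddedPartitions

theorem IsPartitionList.filter_append_replicate_zero {l : List ℕ} (hl : IsPartitionList l)
    (n : ℕ) : (l ++ List.replicate n 0).filter (0 < ·) = l := by
  simpa using hl.2

theorem IsPartitionList.pairwise_append_replicate_zero {l : List ℕ} (hl : IsPartitionList l)
    (n : ℕ) : (l ++ List.replicate n 0).Pairwise (· ≥ ·) := by
  simp [List.pairwise_append, List.pairwise_replicate, hl.1]

theorem isPartitionList_filter_pos {p : List ℕ} (hp : p.Pairwise (· ≥ ·)) :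
    IsPartitionList (p.filter (0 < ·)) :=
  ⟨hp.filter _, by simp⟩

theorem filter_pos_append_replicate_zero {p : List ℕ} (hp : p.Pairwise (· ≥ ·)) :
    p.filter (0 < ·) ++ List.replicate (p.length - (p.filter (0 < ·)).length) 0 = p := by
  induction p with
  | nil => rfl
  | cons x p ih =>
    rw [List.pairwise_cons] at hp
    rcases Nat.eq_zero_or_pos x with rfl | hx
    · have p_eq : p = List.replicate p.length 0 :=
        List.eq_replicate_length.2 fun y hy => Nat.le_zero.1 (hp.1 y hy)
      rw [p_eq]
      simp [List.replicate_succ]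
    · simpa [hx] using ih hp.2

end PaddedPartitions

section BetaSets

/-- The `β`-set with `k` elements of a partition with at most `k` parts, that is, the set of
entries of its row in a symbol in which this row has length `k`. -/
def betaSet (k : ℕ) (l : List ℕ) : Finset ℕ :=
  (shiftedBeta (betaNumber l) (k - l.length)).toFinset

variable {k : ℕ} {l l' : List ℕ}

theorem length_shiftedBeta_betaNumber (l : List ℕ) (n : ℕ) :
    (shiftedBeta (betaNumber l) n).length = l.length + n := by
  simp [shiftedBeta, length_betaNumber]

theorem pairwise_gt_shiftedBeta_betaNumber (hl : IsPartitionList l) (n : ℕ) :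
    (shiftedBeta (betaNumber l) n).Pairwise (· > ·) := by
  rw [shiftedBeta_betaNumber, pairwise_gt_betaNumber_iff]
  exact hl.pairwise_append_replicate_zero n

theorem nodup_shiftedBeta_betaNumber (hl : IsPartitionList l) (n : ℕ) :
    (shiftedBeta (betaNumber l) n).Nodup :=
  (pairwise_gt_shiftedBeta_betaNumber hl n).imp ne_of_gt

theorem betaSet_val (hl : IsPartitionList l) :
    (betaSet k l).val = shiftedBeta (betaNumber l) (k - l.length) := by
  rw [betaSet, List.toFinset_val, (nodup_shiftedBeta_betaNumber hl _).dedup]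

theorem card_betaSet (hl : IsPartitionList l) (hk : l.length ≤ k) : (betaSet k l).card = k := by
  rw [← Finset.card_val, betaSet_val hl, Multiset.coe_card, length_shiftedBeta_betaNumber]
  omega

theorem sum_betaSet (hl : IsPartitionList l) (hk : l.length ≤ k) :
    (betaSet k l).val.sum = l.sum + ∑ i ∈ Finset.range k, i := by
  rw [betaSet_val hl, Multiset.sum_coe, shiftedBeta_betaNumber, sum_betaNumber]
  simp [Nat.add_sub_cancel' hk]

theorem betaSet_inj (hl : IsPartitionList l) (hl' : IsPartitionList l') :
    betaSet k l = betaSet k l' ↔ l = l' := by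
  refine ⟨fun h => ?_, congrArg _⟩
  have perm := Multiset.coe_eq_coe.1 <|
    (betaSet_val hl).symm.trans ((congrArg Finset.val h).trans (betaSet_val hl'))
  have row_eq := perm.eq_of_pairwise (fun _ _ _ _ hab hba => absurd hab (Nat.lt_asymm hba))
    (pairwise_gt_shiftedBeta_betaNumber hl _) (pairwise_gt_shiftedBeta_betaNumber hl' _)
  rw [shiftedBeta_betaNumber, shiftedBeta_betaNumber] at row_eq
  rw [← hl.filter_append_replicate_zero, betaNumber_injective row_eq,
    hl'.filter_append_replicate_zero]

theorem exists_betaSet_card_eq (A : Finset ℕ) :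
    ∃ l, IsPartitionList l ∧ l.length ≤ A.card ∧ betaSet A.card l = A := by
  obtain ⟨p, hp⟩ := exists_betaNumber_eq _ A.sortedGT_sort.pairwise
  have p_sorted : p.Pairwise (· ≥ ·) := by
    rw [← pairwise_gt_betaNumber_iff, hp]
    exact A.sortedGT_sort.pairwise
  have p_length : p.length = A.card := by rw [← length_betaNumber, hp, Finset.length_sort]
  refine ⟨p.filter (0 < ·), isPartitionList_filter_pos p_sorted,
    p_length ▸ p.length_filter_le _, ?_⟩
  rw [betaSet, shiftedBeta_betaNumber, ← p_length, filter_pos_append_replicate_zero p_sorted, hp,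
    Finset.sort_toFinset]

end BetaSets

section SameMargins

variable {ι α : Type*} {S T : Finset ι} {A B C : ι → Finset α}

theorem exists_mem_notMem_of_count_le [DecidableEq α] {a : ι} {x y : α} (ha : a ∈ S) (hx : x ∈ A a)
    (hy : y ∉ A a) (hxy : (∑ i ∈ S, (A i).val).count x ≤ (∑ i ∈ S, (A i).val).count y) :
    ∃ t ∈ S, y ∈ A t ∧ x ∉ A t := by
  contrapose! hxy
  simp only [Multiset.count_sum', Multiset.count_eq_of_nodup (A _).nodup, Finset.mem_val]
  refine Finset.sum_lt_sum (fun i hi => ?_) ⟨a, ha, by simp [hx, hy]⟩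
  have := hxy i hi
  split_ifs <;> simp_all

/-- A family `A` of finite sets is viewed as a `0/1`-matrix whose `i`-th row is the indicator
function of `A i`. `SameMargins S A B` says that `A` and `B` agree in the rows outside `S` and have
the same row sums and the same column sums; the latter are encoded by the multiset union of the
rows in `S`. -/
structure SameMargins (S : Finset ι) (A B : ι → Finset α) : Prop where
  eq_of_notMem : ∀ i ∉ S, A i = B i
  card_eq : ∀ i, (A i).card = (B i).card
  sum_val_eq : ∑ i ∈ S, (A i).val = ∑ i ∈ S, (B i).val

namespace SameMargins

protected theorem refl (S : Finset ι) (A : ι → Finset α) : SameMargins S A A :=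
  ⟨fun _ _ => rfl, fun _ => rfl, rfl⟩

protected theorem symm (h : SameMargins S A B) : SameMargins S B A :=
  ⟨fun i hi => (h.eq_of_notMem i hi).symm, fun i => (h.card_eq i).symm, h.sum_val_eq.symm⟩

protected theorem trans (hAB : SameMargins S A B) (hBC : SameMargins S B C) : SameMargins S A C :=
  ⟨fun i hi => (hAB.eq_of_notMem i hi).trans (hBC.eq_of_notMem i hi),
    fun i => (hAB.card_eq i).trans (hBC.card_eq i), hAB.sum_val_eq.trans hBC.sum_val_eq⟩

theorem mono (hST : S ⊆ T) (h : SameMargins S A B) : SameMargins T A B where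
  eq_of_notMem i hi := h.eq_of_notMem i fun hiS => hi (hST hiS)
  card_eq := h.card_eq
  sum_val_eq := by
    classical
    rw [← Finset.sum_sdiff hST, ← Finset.sum_sdiff hST, h.sum_val_eq]
    congr 1
    exact Finset.sum_congr rfl fun i hi => by rw [h.eq_of_notMem i (Finset.mem_sdiff.1 hi).2]

end SameMargins

variable [DecidableEq ι]

theorem SameMargins.of_insert {a : ι} (ha : a ∉ S) (h : SameMargins (insert a S) A B)
    (hrow : A a = B a) : SameMargins S A B where
  eq_of_notMem i hi := by
    rcases eq_or_ne i a with rfl | hia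
    · exact hrow
    · exact h.eq_of_notMem i (by simp [hia, hi])
  card_eq := h.card_eq
  sum_val_eq := by
    have sum_eq := h.sum_val_eq
    rw [Finset.sum_insert ha, Finset.sum_insert ha, hrow] at sum_eq
    exact add_left_cancel sum_eq

/-- Redistribution of the elements of two rows of a family of finite sets which keeps the
cardinality of each row: the form that the relation `SimC` takes on symbols. -/
def TwoRowMove (A B : ι → Finset α) : Prop :=
  ∃ s t, s ≠ t ∧ SameMargins {s, t} A B

theorem TwoRowMove.symm (h : TwoRowMove A B) : TwoRowMove B A :=
  let ⟨s, t, hst, hAB⟩ := h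
  ⟨s, t, hst, hAB.symm⟩

instance : Std.Symm (TwoRowMove : (ι → Finset α) → (ι → Finset α) → Prop) :=
  ⟨fun _ _ => TwoRowMove.symm⟩

theorem TwoRowMove.sameMargins_univ [Fintype ι] (h : TwoRowMove A B) :
    SameMargins Finset.univ A B :=
  let ⟨_, _, _, hAB⟩ := h
  hAB.mono (Finset.subset_univ _)

section Exchange

variable [DecidableEq α]

/-- The interchange of `x` in row `s` with `y` in row `t`, the elementary two-row move. It is meant
for `s ≠ t` and elements `x`, `y` that lie only in row `s`, respectively only in row `t`, of these
two rows. -/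
def exchange (A : ι → Finset α) (s t : ι) (x y : α) : ι → Finset α :=
  Function.update (Function.update A s (insert y ((A s).erase x))) t (insert x ((A t).erase y))

theorem exchange_left {s t : ι} (hst : s ≠ t) (x y : α) :
    exchange A s t x y s = insert y ((A s).erase x) := by
  simp [exchange, hst]

theorem sameMargins_exchange {s t : ι} {x y : α} (hst : s ≠ t) (hxs : x ∈ A s) (hys : y ∉ A s)
    (hyt : y ∈ A t) (hxt : x ∉ A t) : SameMargins {s, t} A (exchange A s t x y) where
  eq_of_notMem i hi := by
    simp only [Finset.mem_insert, Finset.mem_singleton, not_or] at hi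
    simp [exchange, hi]
  card_eq i := by
    have card_insert_erase {D : Finset α} {u v : α} (hu : u ∈ D) (hv : v ∉ D) :
        D.card = (insert v (D.erase u)).card := by
      rw [Finset.card_insert_of_notMem (by simp [hv]), Finset.card_erase_add_one hu]
    rcases eq_or_ne i t with rfl | hit
    · simpa [exchange] using card_insert_erase hyt hxt
    rcases eq_or_ne i s with rfl | his
    · simpa [exchange, hst] using card_insert_erase hxs hys
    · simp [exchange, hit, his]
  sum_val_eq := by
    rw [Finset.sum_pair hst, Finset.sum_pair hst]
    ext z
    simp only [exchange, Multiset.count_add, Multiset.count_eq_of_nodup (Finset.nodup _),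
      Function.update_self, Function.update_of_ne hst, Finset.mem_val, Finset.mem_insert,
      Finset.mem_erase]
    grind

end Exchange

theorem SameMargins.exists_row_eq {a : ι} (ha : a ∈ S) (h : SameMargins S A B) :
    ∃ A' B', Relation.ReflTransGen TwoRowMove A A' ∧ Relation.ReflTransGen TwoRowMove B B' ∧
      SameMargins S A' B' ∧ A' a = B' a := by
  classical
  induction hn : (A a \ B a).card using Nat.strong_induction_on generalizing A B with
  | _ n ih =>
  subst hn
  rcases (A a \ B a).eq_empty_or_nonempty with hempty | ⟨x, hx⟩
  · exact ⟨A, B, .refl, .refl, h, Finset.eq_of_subset_of_card_le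
      (Finset.sdiff_eq_empty_iff_subset.1 hempty) (h.card_eq a).ge⟩
  have card_comm := Finset.card_sdiff_comm (h.card_eq a)
  obtain ⟨y, hy⟩ : (B a \ A a).Nonempty := by
    rw [← Finset.card_pos, ← card_comm]
    exact Finset.card_pos.2 ⟨x, hx⟩
  wlog hxy : (∑ i ∈ S, (A i).val).count x ≤ (∑ i ∈ S, (A i).val).count y generalizing A B x y
  · obtain ⟨B', A', hB, hA, h', hrow⟩ := this h.symm (card_comm ▸ fun m hm A B => ih m hm)
      y hy card_comm.symm x hx (h.sum_val_eq ▸ (le_of_not_ge hxy))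
    exact ⟨A', B', hA, hB, h'.symm, hrow.symm⟩
  rw [Finset.mem_sdiff] at hx hy
  obtain ⟨t, ht, hyt, hxt⟩ := exists_mem_notMem_of_count_le ha hx.1 hy.2 hxy
  have hat : a ≠ t := by rintro rfl; exact hy.2 hyt
  have move := sameMargins_exchange hat hx.1 hy.2 hyt hxt
  have closer : exchange A a t x y a \ B a ⊂ A a \ B a := by
    rw [exchange_left hat, Finset.insert_sdiff_of_mem _ hy.1, Finset.erase_sdiff_comm]
    exact Finset.erase_ssubset (Finset.mem_sdiff.2 hx)
  obtain ⟨A', B', hA, hB, h', hrow⟩ := ih _ (Finset.card_lt_card closer)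
    ((move.mono (by grind)).symm.trans h) rfl
  exact ⟨A', B', .head ⟨a, t, hat, move⟩ hA, hB, h', hrow⟩

theorem SameMargins.reflTransGen_twoRowMove (h : SameMargins S A B) :
    Relation.ReflTransGen TwoRowMove A B := by
  induction S using Finset.induction_on generalizing A B with
  | empty => exact (funext fun i => h.eq_of_notMem i (Finset.notMem_empty i)) ▸ .refl
  | insert a S ha ih =>
    obtain ⟨A', B', hA, hB, h', hrow⟩ := h.exists_row_eq (Finset.mem_insert_self a S)
    exact (hA.trans (ih (h'.of_insert ha hrow))).trans (symm hB)

theorem sameMargins_univ_iff_reflTransGen_twoRowMove [Fintype ι] :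
    SameMargins Finset.univ A B ↔ Relation.ReflTransGen TwoRowMove A B := by
  refine ⟨SameMargins.reflTransGen_twoRowMove, fun h => ?_⟩
  induction h with
  | refl => exact .refl _ _
  | tail _ hstep ih => exact ih.trans hstep.sameMargins_univ

end SameMargins

section ChargedContent

theorem eq_of_map_add_nsmul_range_eq {c n n' : ℕ} {X Y : Multiset ℕ} (hX : X.count 0 < c)
    (hY : Y.count 0 < c)
    (h : X.map (· + n) + c • Multiset.range n = Y.map (· + n') + c • Multiset.range n') :
    X = Y := by
  wlog hn : n ≤ n' generalizing n n' X Y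
  · exact (this hY hX h.symm (le_of_not_ge hn)).symm
  rcases hn.eq_or_lt with rfl | hlt
  · exact Multiset.map_injective (add_left_injective n) (add_right_cancel h)
  · have count_eq := congrArg (Multiset.count n) h
    have count_map : (X.map (· + n)).count n = X.count 0 := by
      simpa using Multiset.count_map_eq_count' (· + n) X (add_left_injective n) 0
    rw [Multiset.count_add, Multiset.count_add, Multiset.count_nsmul, Multiset.count_nsmul,
      Multiset.count_eq_zero_of_notMem Multiset.notMem_range_self, count_map,
      Multiset.count_eq_one_of_mem (Multiset.nodup_range n') (Multiset.mem_range.2 hlt)] at count_eq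
    omega

variable {d : ℕ} [NeZero d] {m : Fin d → ℤ} {lam mu : Fin d → List ℕ} {N : ℤ} {k : Fin d → ℕ}

theorem charge_le_chargedHeight (m : Fin d → ℤ) (lam : Fin d → List ℕ) (a : Fin d) :
    ((lam a).length : ℤ) - m a ≤ chargedHeight m lam :=
  Finset.le_sup' (fun a => ((lam a).length : ℤ) - m a) (Finset.mem_univ a)

theorem card_chargedContent (m : Fin d → ℤ) (lam : Fin d → List ℕ) :
    ((chargedContent m lam).card : ℤ) = d * chargedHeight m lam + ∑ a, m a := by
  have length_row (a : Fin d) : ((lam a).length : ℤ) +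
      (chargedHeight m lam - (((lam a).length : ℤ) - m a)).toNat = chargedHeight m lam + m a := by
    have := charge_le_chargedHeight m lam a
    omega
  simp only [chargedContent, Multiset.card_sum, Multiset.coe_card, length_shiftedBeta_betaNumber,
    Nat.cast_sum, Nat.cast_add, length_row]
  simp [Finset.sum_add_distrib]

theorem chargedHeight_eq_of_chargedContent_eq
    (h : chargedContent m lam = chargedContent m mu) :
    chargedHeight m lam = chargedHeight m mu := by
  have card_eq := congrArg (fun s => (Multiset.card s : ℤ)) h
  simp only [card_chargedContent, add_left_inj] at card_eq
  exact mul_left_cancel₀ (mod_cast NeZero.ne d) card_eq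

/-- The row whose charge attains the maximum defining `chargedHeight` is not shifted, so it does
not contain `0`. -/
theorem count_zero_chargedContent_lt (hlam : ∀ a, IsPartitionList (lam a)) :
    (chargedContent m lam).count 0 < d := by
  obtain ⟨b, -, hb⟩ := Finset.exists_mem_eq_sup' Finset.univ_nonempty
    fun a => ((lam a).length : ℤ) - m a
  change chargedHeight m lam = _ at hb
  calc (chargedContent m lam).count 0
      = ∑ a, (shiftedBeta (betaNumber (lam a))
          (chargedHeight m lam - (((lam a).length : ℤ) - m a)).toNat).count 0 := by
        simp only [chargedContent, Multiset.count_sum', Multiset.coe_count]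
    _ < ∑ _a : Fin d, 1 := by
        refine Finset.sum_lt_sum (fun a _ => List.nodup_iff_count_le_one.1
          (nodup_shiftedBeta_betaNumber (hlam a) _) 0) ⟨b, Finset.mem_univ b, ?_⟩
        simp [hb, shiftedBeta, List.count_eq_zero_of_not_mem (zero_notMem_betaNumber (hlam b).2)]
    _ = d := by simp

theorem sum_betaSet_val (hlam : ∀ a, IsPartitionList (lam a))
    (hk : ∀ a, (k a : ℤ) = N + m a) (hlen : ∀ a, (lam a).length ≤ k a) :
    ∑ a, (betaSet (k a) (lam a)).val =
      (chargedContent m lam).map (· + (N - chargedHeight m lam).toNat) +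
        d • Multiset.range (N - chargedHeight m lam).toNat := by
  set n := (N - chargedHeight m lam).toNat
  have height_le : chargedHeight m lam ≤ N :=
    Finset.sup'_le _ _ fun a _ => by have := hk a; have := hlen a; omega
  have row_eq (a : Fin d) : (betaSet (k a) (lam a)).val =
      Multiset.mapAddMonoidHom (· + n) (shiftedBeta (betaNumber (lam a))
        (chargedHeight m lam - (((lam a).length : ℤ) - m a)).toNat : Multiset ℕ) +
        Multiset.range n := by
    have shift_eq : k a - (lam a).length =
        n + (chargedHeight m lam - (((lam a).length : ℤ) - m a)).toNat := by
      have := charge_le_chargedHeight m lam a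
      have := hk a
      have := hlen a
      omega
    rw [betaSet_val (hlam a), shift_eq, ← shiftedBeta_shiftedBeta, shiftedBeta.eq_1 _ n,
      ← Multiset.coe_add, Multiset.coe_reverse]
    rfl
  simp only [row_eq, Finset.sum_add_distrib, ← map_sum, Finset.sum_const, Finset.card_univ,
    Fintype.card_fin]
  rfl

theorem chargedContent_eq_iff_sum_betaSet_val_eq (hlam : ∀ a, IsPartitionList (lam a))
    (hmu : ∀ a, IsPartitionList (mu a)) (hk : ∀ a, (k a : ℤ) = N + m a)
    (hlam_len : ∀ a, (lam a).length ≤ k a) (hmu_len : ∀ a, (mu a).length ≤ k a) :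
    chargedContent m lam = chargedContent m mu ↔
      ∑ a, (betaSet (k a) (lam a)).val = ∑ a, (betaSet (k a) (mu a)).val := by
  rw [sum_betaSet_val hlam hk hlam_len, sum_betaSet_val hmu hk hmu_len]
  refine ⟨fun h => by rw [h, chargedHeight_eq_of_chargedContent_eq h], fun h => ?_⟩
  exact eq_of_map_add_nsmul_range_eq (count_zero_chargedContent_lt hlam)
    (count_zero_chargedContent_lt hmu) h

end ChargedContent

section Multipartitions

variable {d r : ℕ} {lam mu : Fin d → List ℕ} {k : Fin d → ℕ}

/-- The rows of the symbol of `lam` whose `a`-th row has `k a` entries, as sets. Unlike the standard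
symbol, its shape does not depend on the heights of the components, so that the symbols of different
multipartitions can be compared row by row. -/
def betaRows (k : Fin d → ℕ) (lam : Fin d → List ℕ) : Fin d → Finset ℕ :=
  fun a => betaSet (k a) (lam a)

theorem IsMultipartitionOf.length_le (h : IsMultipartitionOf d r lam) (a : Fin d) :
    (lam a).length ≤ r :=
  calc (lam a).length ≤ (lam a).sum := List.length_le_sum_of_one_le _ (h.1 a).2
    _ ≤ ∑ b, (lam b).sum :=
      Finset.single_le_sum (f := fun b => (lam b).sum) (fun _ _ => Nat.zero_le _)
        (Finset.mem_univ a)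
    _ = r := h.2

theorem eq_of_betaRows_eq (hlam : IsMultipartitionOf d r lam) (hmu : IsMultipartitionOf d r mu)
    (h : betaRows k lam = betaRows k mu) : lam = mu :=
  funext fun a => (betaSet_inj (hlam.1 a) (hmu.1 a)).1 (congrFun h a)

theorem sum_sum_betaRows (hlam : ∀ a, IsPartitionList (lam a)) (hlen : ∀ a, (lam a).length ≤ k a) :
    (∑ a, (betaRows k lam a).val).sum = ∑ a, (lam a).sum + ∑ a, ∑ i ∈ Finset.range (k a), i := by
  rw [← Multiset.coe_sumAddMonoidHom, map_sum, ← Finset.sum_add_distrib]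
  exact Finset.sum_congr rfl fun a _ => sum_betaSet (hlam a) (hlen a)

theorem exists_betaRows_eq {B : Fin d → Finset ℕ} (hlam : IsMultipartitionOf d r lam)
    (hlen : ∀ a, (lam a).length ≤ k a) (h : SameMargins Finset.univ (betaRows k lam) B) :
    ∃ mu, IsMultipartitionOf d r mu ∧ betaRows k mu = B := by
  have card_B (a : Fin d) : (B a).card = k a :=
    (h.card_eq a).symm.trans (card_betaSet (hlam.1 a) (hlen a))
  choose mu hmu hmu_len hmuB using fun a => exists_betaSet_card_eq (B a)
  simp only [card_B] at hmu_len hmuB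
  have rows_mu : betaRows k mu = B := funext hmuB
  refine ⟨mu, ⟨hmu, ?_⟩, rows_mu⟩
  have sum_eq := congrArg Multiset.sum h.sum_val_eq
  rw [← rows_mu, sum_sum_betaRows hlam.1 hlen, sum_sum_betaRows hmu hmu_len] at sum_eq
  exact (add_right_cancel sum_eq).symm.trans hlam.2

theorem sameMargins_betaRows_iff (hlam : ∀ a, IsPartitionList (lam a))
    (hmu : ∀ a, IsPartitionList (mu a)) (hlam_len : ∀ a, (lam a).length ≤ k a)
    (hmu_len : ∀ a, (mu a).length ≤ k a) (S : Finset (Fin d)) :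
    SameMargins S (betaRows k lam) (betaRows k mu) ↔
      (∀ a ∉ S, lam a = mu a) ∧
        ∑ a ∈ S, (betaSet (k a) (lam a)).val = ∑ a ∈ S, (betaSet (k a) (mu a)).val :=
  ⟨fun h => ⟨fun a ha => (betaSet_inj (hlam a) (hmu a)).1 (h.eq_of_notMem a ha), h.sum_val_eq⟩,
    fun h => ⟨fun a ha => congrArg _ (h.1 a ha), fun a => (card_betaSet (hlam a) (hlam_len a)).trans
      (card_betaSet (hmu a) (hmu_len a)).symm, h.2⟩⟩

variable {m : Fin d → ℤ} {N : ℤ}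

theorem pair_chargedContent_eq_iff (hlam : ∀ a, IsPartitionList (lam a))
    (hmu : ∀ a, IsPartitionList (mu a)) (hk : ∀ a, (k a : ℤ) = N + m a)
    (hlam_len : ∀ a, (lam a).length ≤ k a) (hmu_len : ∀ a, (mu a).length ≤ k a)
    {s t : Fin d} (hst : s ≠ t) :
    chargedContent ![m s, m t] ![lam s, lam t] = chargedContent ![m s, m t] ![mu s, mu t] ↔
      ∑ a ∈ {s, t}, (betaSet (k a) (lam a)).val = ∑ a ∈ {s, t}, (betaSet (k a) (mu a)).val := by
  rw [Finset.sum_pair hst, Finset.sum_pair hst,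
    chargedContent_eq_iff_sum_betaSet_val_eq (m := ![m s, m t])
      (lam := ![lam s, lam t]) (mu := ![mu s, mu t]) (N := N) (k := ![k s, k t])
      (Fin.forall_fin_two.2 ⟨hlam s, hlam t⟩) (Fin.forall_fin_two.2 ⟨hmu s, hmu t⟩)
      (Fin.forall_fin_two.2 ⟨hk s, hk t⟩) (Fin.forall_fin_two.2 ⟨hlam_len s, hlam_len t⟩)
      (Fin.forall_fin_two.2 ⟨hmu_len s, hmu_len t⟩), Fin.sum_univ_two, Fin.sum_univ_two]
  rfl

variable [NeZero d]

theorem chargedContent_eq_iff_sameMargins (hlam : ∀ a, IsPartitionList (lam a))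
    (hmu : ∀ a, IsPartitionList (mu a)) (hk : ∀ a, (k a : ℤ) = N + m a)
    (hlam_len : ∀ a, (lam a).length ≤ k a) (hmu_len : ∀ a, (mu a).length ≤ k a) :
    chargedContent m lam = chargedContent m mu ↔
      SameMargins Finset.univ (betaRows k lam) (betaRows k mu) := by
  rw [chargedContent_eq_iff_sum_betaSet_val_eq hlam hmu hk hlam_len hmu_len,
    sameMargins_betaRows_iff hlam hmu hlam_len hmu_len]
  simp

theorem simC_iff_twoRowMove (hlam : ∀ a, IsPartitionList (lam a))
    (hmu : ∀ a, IsPartitionList (mu a)) (hk : ∀ a, (k a : ℤ) = N + m a)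
    (hlam_len : ∀ a, (lam a).length ≤ k a) (hmu_len : ∀ a, (mu a).length ≤ k a) :
    SimC m lam mu ↔ TwoRowMove (betaRows k lam) (betaRows k mu) := by
  have pair_iff {s t : Fin d} (hst : s ≠ t) :
      SameMargins {s, t} (betaRows k lam) (betaRows k mu) ↔
        (∀ a, a ≠ s → a ≠ t → lam a = mu a) ∧
          chargedContent ![m s, m t] ![lam s, lam t] =
            chargedContent ![m s, m t] ![mu s, mu t] := by
    rw [sameMargins_betaRows_iff hlam hmu hlam_len hmu_len,
      pair_chargedContent_eq_iff hlam hmu hk hlam_len hmu_len hst]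
    simp
  constructor
  · rintro ⟨s, t, hst, h⟩
    exact ⟨s, t, hst.ne, (pair_iff hst.ne).2 h⟩
  · rintro ⟨s, t, hst, h⟩
    rcases hst.lt_or_gt with hlt | hlt
    · exact ⟨s, t, hlt, (pair_iff hst).1 h⟩
    · exact ⟨t, s, hlt, (pair_iff hst.symm).1 (Finset.pair_comm s t ▸ h)⟩

end Multipartitions

section Chains

theorem exists_reflTransGen_of_lifts {α β : Type*} {r : α → α → Prop} {r' : β → β → Prop}
    {f : α → β} (lifts : ∀ a b, r' (f a) b → ∃ a', r a a' ∧ f a' = b) {a : α} {b : β}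
    (h : Relation.ReflTransGen r' (f a) b) : ∃ a', Relation.ReflTransGen r a a' ∧ f a' = b := by
  induction h with
  | refl => exact ⟨a, .refl, rfl⟩
  | tail _ hbc ih =>
    obtain ⟨a', ha', rfl⟩ := ih
    obtain ⟨a'', ha'', rfl⟩ := lifts a' _ hbc
    exact ⟨a'', ha'.tail ha'', rfl⟩

theorem reflTransGen_subtype_iff_exists_chain {α : Type*} {p : α → Prop} {r : α → α → Prop}
    {x y : {a // p a}} :
    Relation.ReflTransGen (fun u v : {a // p a} => r u v) x y ↔
      ∃ (n : ℕ) (c : ℕ → α), c 0 = x ∧ c n = y ∧ (∀ i ≤ n, p (c i)) ∧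
        ∀ i < n, r (c i) (c (i + 1)) := by
  constructor
  · intro h
    induction h using Relation.ReflTransGen.head_induction_on with
    | refl => exact ⟨0, fun _ => y, rfl, rfl, fun _ _ => y.2, by simp⟩
    | @head x z hxz _ ih =>
      obtain ⟨n, c, hc_zero, hc_last, hc_mem, hc_step⟩ := ih
      refine ⟨n + 1, fun i => Nat.casesOn i x c, rfl, hc_last, ?_, ?_⟩
      · rintro (_ | i) hi
        exacts [x.2, hc_mem i (Nat.le_of_succ_le_succ hi)]
      · rintro (_ | i) hi
        exacts [(congrArg (r x) hc_zero).mpr hxz, hc_step i (Nat.lt_of_succ_lt_succ hi)]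
  · rintro ⟨n, c, hc_zero, hc_last, hc_mem, hc_step⟩
    have reach (i : ℕ) (hi : i ≤ n) :
        Relation.ReflTransGen (fun u v : {a // p a} => r u v) x ⟨c i, hc_mem i hi⟩ := by
      induction i with
      | zero => exact (Subtype.ext hc_zero.symm : x = ⟨c 0, _⟩) ▸ .refl
      | succ i ih => exact (ih (Nat.le_of_succ_le hi)).tail (hc_step i hi)
    exact (Subtype.ext hc_last : ⟨c n, _⟩ = y) ▸ reach n le_rfl

theorem reflTransGen_simC_iff_reflTransGen_twoRowMove {d r : ℕ} [NeZero d] {m : Fin d → ℤ} {N : ℤ}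
    {k : Fin d → ℕ} (hk : ∀ a, (k a : ℤ) = N + m a) (hr : ∀ a, r ≤ k a)
    {x y : {lam // IsMultipartitionOf d r lam}} :
    Relation.ReflTransGen (fun u v : {lam // IsMultipartitionOf d r lam} => SimC m u v) x y ↔
      Relation.ReflTransGen TwoRowMove (betaRows k x) (betaRows k y) := by
  have length_le (u : {lam // IsMultipartitionOf d r lam}) (a : Fin d) : (u.1 a).length ≤ k a :=
    (u.2.length_le a).trans (hr a)
  have simC_iff (u v : {lam // IsMultipartitionOf d r lam}) :
      SimC m u v ↔ TwoRowMove (betaRows k u) (betaRows k v) :=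
    simC_iff_twoRowMove u.2.1 v.2.1 hk (length_le u) (length_le v)
  refine ⟨Relation.ReflTransGen.lift (fun u => betaRows k u.1) (fun u v => (simC_iff u v).1) x y,
    fun h => ?_⟩
  have lifts (u : {lam // IsMultipartitionOf d r lam}) (B : Fin d → Finset ℕ)
      (huB : TwoRowMove (betaRows k u) B) :
      ∃ v : {lam // IsMultipartitionOf d r lam}, SimC m u v ∧ betaRows k v = B := by
    obtain ⟨v, hv, rfl⟩ := exists_betaRows_eq u.2 (length_le u) huB.sameMargins_univ
    exact ⟨⟨v, hv⟩, (simC_iff u ⟨v, hv⟩).2 huB, rfl⟩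
  obtain ⟨z, hxz, hzy⟩ := exists_reflTransGen_of_lifts lifts h
  exact (Subtype.ext (eq_of_betaRows_eq z.2 y.2 hzy) : z = y) ▸ hxz

end Chains

/-- Let `d ≥ 2`, let `m ∈ ℤ^d` be a weight system, and let `λ, μ` be
`d`-partitions of `r`. Then `Contc_λ = Contc_μ` as multisets if and only if there is a finite
sequence `λ_(0) = λ, λ_(1), …, λ_(n) = μ` of `d`-partitions of `r` with
`λ_(i-1) ∼_C λ_(i)` for all `1 ≤ i ≤ n`. -/
theorem chargedContent_eq_iff_simC_chain (d r : ℕ) (hd : 2 ≤ d) [NeZero d] (m : Fin d → ℤ)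
    (lam mu : Fin d → List ℕ)
    (hlam : IsMultipartitionOf d r lam) (hmu : IsMultipartitionOf d r mu) :
    chargedContent m lam = chargedContent m mu ↔
      ∃ (n : ℕ) (c : ℕ → Fin d → List ℕ),
        c 0 = lam ∧ c n = mu ∧ (∀ i ≤ n, IsMultipartitionOf d r (c i)) ∧
        ∀ i < n, SimC m (c i) (c (i + 1)) := by
  obtain ⟨N, hN⟩ : ∃ N : ℤ, ∀ a, (r : ℤ) ≤ N + m a :=
    ⟨r + ∑ b, |m b|, fun a => by
      have := Finset.single_le_sum (fun b _ => abs_nonneg (m b)) (Finset.mem_univ a)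
      have := neg_abs_le (m a)
      omega⟩
  obtain ⟨k, hk⟩ : ∃ k : Fin d → ℕ, ∀ a, (k a : ℤ) = N + m a :=
    ⟨fun a => (N + m a).toNat, fun a => Int.toNat_of_nonneg ((Int.natCast_nonneg r).trans (hN a))⟩
  have hr (a : Fin d) : r ≤ k a := by have := hN a; have := hk a; omega
  rw [chargedContent_eq_iff_sameMargins hlam.1 hmu.1 hk
      (fun a => (hlam.length_le a).trans (hr a)) (fun a => (hmu.length_le a).trans (hr a)),
    sameMargins_univ_iff_reflTransGen_twoRowMove,
    ← reflTransGen_simC_iff_reflTransGen_twoRowMove (x := ⟨lam, hlam⟩) (y := ⟨mu, hmu⟩) hk hr,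
    reflTransGen_subtype_iff_exists_chain]
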